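/- Let (𝕊_m)_{m∈ω} be a sequence of separable LMPs (with countable label sets) whose Zhou ordinals ζ_m := Z(𝕊_m) form a strictly increasing sequence with ζ₀ > 0. Then there exists a separable LMP 𝕊 (with countable label set) such that Z(𝕊) ≥ (sup_{m∈ω} ζ_m) + 1. Consequently, the supremum of the Zhou ordinals of separable LMPs has uncountable cofinality. -/

import Mathlib

open MeasureTheory

/-- A labelled Markov process over the measurable space `S` with label set `L`:
each `τ a` is a Markov kernel, i.e. `τ a s` is a subprobability measure for each state `s`,
and `s ↦ τ a s E` is measurable for each measurable `E`. -/
structure LMP (S : Type*) (L : Type*) [MeasurableSpace S] where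
  τ : L → S → Measure S
  prob_le_one : ∀ (a : L) (s : S), τ a s Set.univ ≤ 1
  measurable_eval : ∀ (a : L) (E : Set S), MeasurableSet E → Measurable fun s => τ a s E

namespace LMP

variable {S L : Type*} [MeasurableSpace S]

/-- `A` is `R`-closed: anything related to a point of `A` lies in `A`. -/
def RClosed (R : Set (S × S)) (A : Set S) : Prop :=
  ∀ ⦃x⦄, x ∈ A → ∀ ⦃s⦄, (x, s) ∈ R → s ∈ A

/-- `Σ(R)`: the family of measurable `R`-closed sets. -/
def sigmaCl (R : Set (S × S)) : Set (Set S) :=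
  {A | MeasurableSet A ∧ RClosed R A}

/-- `R(Λ)`: the relation identifying states belonging to exactly the same members of `Λ`. -/
def rel (Λ : Set (Set S)) : Set (S × S) :=
  {p | ∀ A ∈ Λ, p.1 ∈ A ↔ p.2 ∈ A}

/-- `R^T(Λ)`: states assigning the same probabilities to every member of `Λ`, for all labels. -/
def relT (M : LMP S L) (Λ : Set (Set S)) : Set (S × S) :=
  {p | ∀ (a : L), ∀ E ∈ Λ, M.τ a p.1 E = M.τ a p.2 E}

/-- The operator `𝒪`. -/
def Oop (M : LMP S L) (R : Set (S × S)) : Set (S × S) :=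
  M.relT (sigmaCl R)

/-- The operator `𝒢`. -/
def Gop (M : LMP S L) (Λ : Set (Set S)) : Set (Set S) :=
  sigmaCl (M.relT Λ)

/-- The members of the σ-algebra generated by a family of sets. -/
def sigmaGen (U : Set (Set S)) : Set (Set S) :=
  {A | MeasurableSet[MeasurableSpace.generateFrom U] A}

/-- Transfinite iterates of `𝒪`. -/
noncomputable def Oiter (M : LMP S L) (R : Set (S × S)) (α : Ordinal) : Set (S × S) :=
  Ordinal.limitRecOn α R (fun _ prev => M.Oop prev)
    (fun o _ ih => ⋂ (o' : Ordinal) (h : o' < o), ih o' h)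

/-- Transfinite iterates of `𝒢`. -/
noncomputable def Giter (M : LMP S L) (Λ : Set (Set S)) (α : Ordinal) : Set (Set S) :=
  Ordinal.limitRecOn α Λ (fun _ prev => M.Gop prev)
    (fun o _ ih => sigmaGen (⋃ (o' : Ordinal) (h : o' < o), ih o' h))

/-- `Λ` is a sub-σ-algebra of the ambient σ-algebra. -/
structure IsSubSigmaAlgebra (Λ : Set (Set S)) : Prop where
  subset_meas : ∀ A ∈ Λ, MeasurableSet A
  empty_mem : (∅ : Set S) ∈ Λ
  compl_mem : ∀ A ∈ Λ, Aᶜ ∈ Λ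
  iUnion_mem : ∀ f : ℕ → Set S, (∀ n, f n ∈ Λ) → (⋃ n, f n) ∈ Λ

/-- A family `Λ` is stable w.r.t. the process. -/
def Stable (M : LMP S L) (Λ : Set (Set S)) : Prop :=
  ∀ A ∈ Λ, ∀ q : ℚ, 0 ≤ q → q ≤ 1 → ∀ a : L,
    {s : S | ENNReal.ofReal (q : ℝ) < M.τ a s A} ∈ Λ

/-- A state bisimulation: a symmetric relation such that related states agree on
all measurable `R`-closed sets. -/
def IsStateBisim (M : LMP S L) (R : Set (S × S)) : Prop :=
  (∀ p ∈ R, (p.2, p.1) ∈ R) ∧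
    ∀ p ∈ R, ∀ (a : L), ∀ C ∈ sigmaCl R, M.τ a p.1 C = M.τ a p.2 C

/-- State bisimilarity. -/
def stateBisim (M : LMP S L) : Set (S × S) :=
  {p | ∃ R, M.IsStateBisim R ∧ p ∈ R}

/-- Event bisimilarity: related by `R(Λ)` for some stable sub-σ-algebra `Λ`. -/
def eventBisim (M : LMP S L) : Set (S × S) :=
  {p | ∃ Λ : Set (Set S), IsSubSigmaAlgebra Λ ∧ M.Stable Λ ∧ p ∈ rel Λ}

/-- Formulas of the modal logic `𝓛`. -/
inductive LForm (L : Type*) : Type _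
  | top : LForm L
  | and : LForm L → LForm L → LForm L
  | dia : L → {q : ℚ // 0 ≤ q ∧ q < 1} → LForm L → LForm L

/-- Semantics of the logic `𝓛`. -/
def sem (M : LMP S L) : LForm L → Set S
  | LForm.top => Set.univ
  | LForm.and φ ψ => M.sem φ ∩ M.sem ψ
  | LForm.dia a q φ => {s | ENNReal.ofReal ((q : ℚ) : ℝ) < M.τ a s (M.sem φ)}

/-- `σ(⟦𝓛⟧)`: the σ-algebra generated by the sets definable in the logic. -/
def sigmaLogic (M : LMP S L) : Set (Set S) :=
  sigmaGen (Set.range M.sem)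

end LMP

/-- A measurable space is separable if its σ-algebra is countably generated and
separates points. -/
def SeparableMeasurableSpace (S : Type*) [m : MeasurableSpace S] : Prop :=
  (∃ U : Set (Set S), U.Countable ∧ MeasurableSpace.generateFrom U = m) ∧
    ∀ s t : S, s ≠ t → ∃ A : Set S, MeasurableSet A ∧ s ∈ A ∧ t ∉ A

namespace LMP

/-- `ζ` is the Zhou ordinal of `M`: the least ordinal `α` such that `𝒪^α(∼e) = ∼s`. -/
def IsZhou {S L : Type*} [MeasurableSpace S] (M : LMP S L) (ζ : Ordinal) : Prop :=
  M.Oiter M.eventBisim ζ = M.stateBisim ∧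
    ∀ β < ζ, M.Oiter M.eventBisim β ≠ M.stateBisim

end LMP

/-- A labelled Markov process bundled together with its state space and a countable
label set. -/
structure PackedLMP : Type 1 where
  S : Type
  mS : MeasurableSpace S
  L : Type
  cL : Countable L
  M : @LMP S L mS

namespace PackedLMP

/-- The bundled LMP is separable. -/
def Separable (P : PackedLMP) : Prop :=
  letI := P.mS; SeparableMeasurableSpace P.S

/-- `ζ` is the Zhou ordinal of the bundled LMP. -/
def IsZhou (P : PackedLMP) (ζ : Ordinal.{0}) : Prop :=
  letI := P.mS; LMP.IsZhou P.M ζ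

end PackedLMP

/-- The set of Zhou ordinals of separable LMPs. -/
def zhouOrdinals : Set Ordinal.{0} :=
  {ζ | ∃ P : PackedLMP, P.Separable ∧ P.IsZhou ζ}

/-!
Lebesgue measure on the circle has two different extensions to the σ-algebra generated by the Borel
sets and one non-measurable set. Let `Y` be the circle with this larger σ-algebra, and describe
each `y : Y` by a sequence of bits which determines `y` and depends on it in a Borel way. Given
processes with two chosen states each, not state bisimilar, let `y` move under the `m`-th probe to
the state of the `m`-th process selected by the `m`-th bit of `y`, and let two roots launch into
`Y` according to the two extensions. The σ-algebra of sets whose trace on `Y` is Borel is stable,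
and both roots launch into its members with the same probability, so the roots are event bisimilar.
State bisimilarity however separates the points of `Y`, hence sees the non-measurable set and
separates the roots.

Suppose the chosen states of the `m`-th process are still related after `γ m` iterations of `𝒪`,
where `γ` is monotone. Then points of `Y` which share their first `n` bits are related after `γ n +
1` iterations, so closed subsets of `Y` depend on the first `n` bits only, the two extensions agree
on them, and the roots are related after `γ n + 2` iterations. This holds for all `n`, so the Zhou
ordinal of the glued process exceeds `⨆ n, (γ n + 1)`: the ordinals below some Zhou ordinal are
closed under countable strict suprema.
-/

universe u

theorem dirac_apply_eq_dirac_apply_iff {S : Type*} [MeasurableSpace S] {s t : S} {E : Set S}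
    (hE : MeasurableSet E) :
    Measure.dirac s E = Measure.dirac t E ↔ (s ∈ E ↔ t ∈ E) := by
  by_cases hs : s ∈ E <;> by_cases ht : t ∈ E <;> simp [Measure.dirac_apply' _ hE, hs, ht]

namespace LMP

section Bisimilarity

theorem isSubSigmaAlgebra_of_le {S : Type*} {m m' : MeasurableSpace S} (h : m ≤ m') :
    IsSubSigmaAlgebra {A : Set S | MeasurableSet[m] A} where
  subset_meas _ hA := h _ hA
  empty_mem := MeasurableSpace.measurableSet_empty m
  compl_mem _ hA := MeasurableSet.compl hA
  iUnion_mem _ hf := MeasurableSet.iUnion hf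

variable {S L : Type*} [MeasurableSpace S] (M : LMP S L)

theorem sigmaCl_anti {R R' : Set (S × S)} (h : R ⊆ R') : sigmaCl R' ⊆ sigmaCl R :=
  fun _ hA => ⟨hA.1, fun _ hx _ hs => hA.2 hx (h hs)⟩

theorem Oop_mono {R R' : Set (S × S)} (h : R ⊆ R') : M.Oop R ⊆ M.Oop R' :=
  fun _ hp a E hE => hp a E (sigmaCl_anti h hE)

theorem Oop_symm {R : Set (S × S)} {s t : S} (h : (s, t) ∈ M.Oop R) : (t, s) ∈ M.Oop R :=
  fun a E hE => (h a E hE).symm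

theorem IsStateBisim.subset_stateBisim {M : LMP S L} {R : Set (S × S)} (hR : M.IsStateBisim R) :
    R ⊆ M.stateBisim :=
  fun _ hp => ⟨R, hR, hp⟩

theorem isStateBisim_Oop {R : Set (S × S)} (h : R ⊆ M.Oop R) : M.IsStateBisim (M.Oop R) :=
  ⟨fun _ => M.Oop_symm, M.Oop_mono h⟩

theorem subset_stateBisim_of_subset_Oop {R : Set (S × S)} (h : R ⊆ M.Oop R) : R ⊆ M.stateBisim :=
  h.trans (M.isStateBisim_Oop h).subset_stateBisim

theorem stateBisim_symm {s t : S} (h : (s, t) ∈ M.stateBisim) : (t, s) ∈ M.stateBisim := by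
  obtain ⟨R, hR, hst⟩ := h
  exact ⟨R, hR, hR.1 _ hst⟩

theorem stateBisim_subset_Oop : M.stateBisim ⊆ M.Oop M.stateBisim := by
  rintro p ⟨R, hR, hp⟩
  exact M.Oop_mono hR.subset_stateBisim (hR.2 p hp)

theorem Oop_stateBisim : M.Oop M.stateBisim = M.stateBisim :=
  Set.Subset.antisymm (M.isStateBisim_Oop M.stateBisim_subset_Oop).subset_stateBisim
    M.stateBisim_subset_Oop

theorem measurableSet_lt_τ (a : L) {A : Set S} (hA : MeasurableSet A) (r : ENNReal) :
    MeasurableSet {s | r < M.τ a s A} :=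
  measurableSet_lt measurable_const (M.measurable_eval a A hA)

theorem stable_measurableSet : M.Stable {A | MeasurableSet A} :=
  fun _ hA _ _ _ a => M.measurableSet_lt_τ a hA _

theorem isSubSigmaAlgebra_sigmaCl {R : Set (S × S)} (hR : ∀ p ∈ R, (p.2, p.1) ∈ R) :
    IsSubSigmaAlgebra (sigmaCl R) where
  subset_meas _ hA := hA.1
  empty_mem := ⟨MeasurableSet.empty, fun _ hx => hx.elim⟩
  compl_mem _ hA := ⟨hA.1.compl, fun _ hx _ hxs hs => hx (hA.2 hs (hR _ hxs))⟩
  iUnion_mem f hf := by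
    refine ⟨MeasurableSet.iUnion fun n => (hf n).1, fun x hx s hxs => ?_⟩
    obtain ⟨n, hn⟩ := Set.mem_iUnion.1 hx
    exact Set.mem_iUnion.2 ⟨n, (hf n).2 hn hxs⟩

theorem stable_sigmaCl {R : Set (S × S)} (h : R ⊆ M.Oop R) : M.Stable (sigmaCl R) :=
  fun A hA _ _ _ a =>
    ⟨M.measurableSet_lt_τ a hA.1 _, fun _ hx _ hxs => hx.trans_eq (h hxs a A hA)⟩

theorem subset_rel_sigmaCl {R : Set (S × S)} (hR : ∀ p ∈ R, (p.2, p.1) ∈ R) :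
    R ⊆ rel (sigmaCl R) :=
  fun p hp _ hA => ⟨fun h => hA.2 h hp, fun h => hA.2 h (hR p hp)⟩

theorem eventBisim_symm {s t : S} : (s, t) ∈ M.eventBisim → (t, s) ∈ M.eventBisim :=
  fun ⟨Λ, hΛ, hstable, h⟩ => ⟨Λ, hΛ, hstable, fun A hA => (h A hA).symm⟩

theorem stateBisim_subset_eventBisim : M.stateBisim ⊆ M.eventBisim := by
  have hsymm : ∀ p ∈ M.stateBisim, (p.2, p.1) ∈ M.stateBisim := fun _ => M.stateBisim_symm
  exact fun p hp => ⟨_, isSubSigmaAlgebra_sigmaCl hsymm, M.stable_sigmaCl M.stateBisim_subset_Oop,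
    subset_rel_sigmaCl hsymm hp⟩

-- If `τ a s E ≠ τ a t E`, then the fibre of `τ a · E` through `s` is a closed set without `t`.
theorem rel_sigmaCl_stateBisim : rel (sigmaCl M.stateBisim) = M.stateBisim := by
  refine Set.Subset.antisymm (fun p hp => ?_) (subset_rel_sigmaCl fun _ => M.stateBisim_symm)
  rw [← M.Oop_stateBisim]
  intro a E hE
  have hfibre : {v | M.τ a v E = M.τ a p.1 E} ∈ sigmaCl M.stateBisim :=
    ⟨M.measurable_eval a E hE.1 (measurableSet_singleton _),
      fun _ hx _ hxs => (M.stateBisim_subset_Oop hxs a E hE).symm.trans hx⟩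
  exact ((hp _ hfibre).1 rfl).symm

theorem measure_univ_eq_of_mem_stateBisim {s t : S} (h : (s, t) ∈ M.stateBisim) (a : L) :
    M.τ a s Set.univ = M.τ a t Set.univ :=
  M.stateBisim_subset_Oop h a _ ⟨MeasurableSet.univ, fun _ _ _ _ => trivial⟩

theorem rClosed_setOf_τ_univ_ne_zero (a : L) :
    RClosed M.stateBisim {s | M.τ a s Set.univ ≠ 0} :=
  fun _ hx _ hxs => (M.measure_univ_eq_of_mem_stateBisim hxs a).symm.trans_ne hx

theorem mem_stateBisim_of_τ_eq_dirac {x y s t : S} {a : L} (h : (x, y) ∈ M.stateBisim)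
    (hx : M.τ a x = Measure.dirac s) (hy : M.τ a y = Measure.dirac t) :
    (s, t) ∈ M.stateBisim := by
  rw [← rel_sigmaCl_stateBisim]
  intro E hE
  rw [← dirac_apply_eq_dirac_apply_iff hE.1, ← hx, ← hy]
  exact M.stateBisim_subset_Oop h a E hE

/-- The smallest stable σ-algebra, given as the sets lying in all stable sub-σ-algebras. -/
def leastStable : Set (Set S) :=
  {A | ∀ Λ, IsSubSigmaAlgebra Λ → M.Stable Λ → A ∈ Λ}

theorem leastStable_subset_sigmaCl : M.leastStable ⊆ sigmaCl M.eventBisim := by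
  refine fun A hA => ⟨hA _ (isSubSigmaAlgebra_of_le le_rfl) M.stable_measurableSet, ?_⟩
  rintro x hx y ⟨Λ, hΛ, hstable, hxy⟩
  exact (hxy A (hA Λ hΛ hstable)).1 hx

theorem isSubSigmaAlgebra_leastStable : IsSubSigmaAlgebra M.leastStable where
  subset_meas _ hA := (M.leastStable_subset_sigmaCl hA).1
  empty_mem _ hΛ _ := hΛ.empty_mem
  compl_mem A hA Λ hΛ hstable := hΛ.compl_mem A (hA Λ hΛ hstable)
  iUnion_mem f hf Λ hΛ hstable := hΛ.iUnion_mem f fun n => hf n Λ hΛ hstable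

theorem stable_leastStable : M.Stable M.leastStable :=
  fun A hA q hq hq' a Λ hΛ hstable => hstable A (hA Λ hΛ hstable) q hq hq' a

theorem IsSubSigmaAlgebra.sep_mem_iff {Λ : Set (Set S)} (hΛ : IsSubSigmaAlgebra Λ) (s t : S) :
    IsSubSigmaAlgebra {A ∈ Λ | s ∈ A ↔ t ∈ A} where
  subset_meas A hA := hΛ.subset_meas A hA.1
  empty_mem := ⟨hΛ.empty_mem, Iff.rfl⟩
  compl_mem A hA := ⟨hΛ.compl_mem A hA.1, not_congr hA.2⟩
  iUnion_mem f hf := by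
    refine ⟨hΛ.iUnion_mem f fun n => (hf n).1, ?_⟩
    simp only [Set.mem_iUnion]
    exact exists_congr fun n => (hf n).2

theorem mem_eventBisim_of_mem_relT {Λ : Set (Set S)} (hΛ : IsSubSigmaAlgebra Λ)
    (hstable : M.Stable Λ) {s t : S} (hst : (s, t) ∈ M.relT Λ) : (s, t) ∈ M.eventBisim := by
  refine ⟨_, hΛ.sep_mem_iff s t, fun A hA q hq hq' a => ⟨hstable A hA.1 q hq hq' a, ?_⟩,
    fun _ hA => hA.2⟩
  exact iff_of_eq (congrArg (_ < ·) (hst a A hA.1))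

theorem Oop_eventBisim_subset : M.Oop M.eventBisim ⊆ M.eventBisim :=
  fun _ hp => M.mem_eventBisim_of_mem_relT M.isSubSigmaAlgebra_leastStable M.stable_leastStable
    fun a A hA => hp a A (M.leastStable_subset_sigmaCl hA)

end Bisimilarity

section Iterates

variable {S L : Type*} [MeasurableSpace S] (M : LMP S L) {R : Set (S × S)} {α β : Ordinal}

@[simp]
theorem Oiter_zero (R : Set (S × S)) : M.Oiter R 0 = R := by
  simp [Oiter]

theorem Oiter_add_one (R : Set (S × S)) (α : Ordinal) :
    M.Oiter R (α + 1) = M.Oop (M.Oiter R α) := by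
  simp [Oiter]

theorem Oiter_limit (R : Set (S × S)) (h : Order.IsSuccLimit α) :
    M.Oiter R α = ⋂ β < α, M.Oiter R β := by
  unfold Oiter
  rw [Ordinal.limitRecOn_limit _ _ _ _ h]

theorem Oiter_add_one_subset (h : M.Oop R ⊆ R) (α : Ordinal) :
    M.Oiter R (α + 1) ⊆ M.Oiter R α := by
  induction α using Ordinal.limitRecOn with
  | zero => rwa [Oiter_add_one, Oiter_zero]
  | add_one α ih =>
    rw [Oiter_add_one _ _ (α + 1)]
    exact (M.Oop_mono ih).trans_eq (M.Oiter_add_one R α).symm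
  | limit α hα ih =>
    rw [Oiter_add_one, M.Oiter_limit R hα]
    refine Set.subset_iInter₂ fun β hβ => Set.Subset.trans ?_ (ih β hβ)
    rw [Oiter_add_one]
    exact M.Oop_mono (Set.iInter₂_subset β hβ)

theorem Oiter_antitone (h : M.Oop R ⊆ R) : Antitone (M.Oiter R) := by
  intro α β hαβ
  induction β using Ordinal.limitRecOn with
  | zero => rw [nonpos_iff_eq_zero.1 hαβ]
  | add_one β ih =>
    rcases hαβ.eq_or_lt with rfl | hlt
    · rfl
    · exact (M.Oiter_add_one_subset h β).trans (ih (Order.lt_add_one_iff.1 hlt))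
  | limit β hβ ih =>
    rcases hαβ.eq_or_lt with rfl | hlt
    · rfl
    · rw [M.Oiter_limit R hβ]
      exact Set.iInter₂_subset α hlt

theorem stateBisim_subset_Oiter (h : M.stateBisim ⊆ R) (α : Ordinal) :
    M.stateBisim ⊆ M.Oiter R α := by
  induction α using Ordinal.limitRecOn with
  | zero => rwa [Oiter_zero]
  | add_one α ih => rw [Oiter_add_one, ← M.Oop_stateBisim]; exact M.Oop_mono ih
  | limit α hα ih => rw [M.Oiter_limit R hα]; exact Set.subset_iInter₂ ih

theorem Oiter_symm (h : ∀ s t, (s, t) ∈ R → (t, s) ∈ R) (α : Ordinal) {s t : S}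
    (hst : (s, t) ∈ M.Oiter R α) : (t, s) ∈ M.Oiter R α := by
  induction α using Ordinal.limitRecOn with
  | zero => rw [Oiter_zero] at hst ⊢; exact h s t hst
  | add_one α _ => rw [Oiter_add_one] at hst ⊢; exact M.Oop_symm hst
  | limit α hα ih =>
    rw [M.Oiter_limit R hα, Set.mem_iInter₂] at hst ⊢
    exact fun β hβ => ih β hβ (hst β hβ)

theorem mem_Oiter_iSup {ι : Type*} [Small.{u} ι] (h : M.Oop R ⊆ R) {f : ι → Ordinal.{u}}
    {p : S × S} (hR : p ∈ R) (hp : ∀ i, p ∈ M.Oiter R (f i)) : p ∈ M.Oiter R (⨆ i, f i) := by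
  have key : ∀ α ≤ ⨆ i, f i, p ∈ M.Oiter R α := fun α => by
    induction α using Ordinal.limitRecOn with
    | zero => exact fun _ => by rwa [Oiter_zero]
    | add_one α _ =>
      intro hα
      obtain ⟨i, hi⟩ := Ordinal.lt_iSup_iff.1 (Order.add_one_le_iff.1 hα)
      exact M.Oiter_antitone h (Order.add_one_le_of_lt hi) (hp i)
    | limit α hα ih =>
      intro hle
      rw [M.Oiter_limit R hα, Set.mem_iInter₂]
      exact fun β hβ => ih β hβ (hβ.le.trans hle)
  exact key _ le_rfl

theorem Oiter_eq_stateBisim_of_lt_of_eq (h : M.Oop R ⊆ R) (hR : M.stateBisim ⊆ R) (hlt : α < β)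
    (heq : M.Oiter R α = M.Oiter R β) : M.Oiter R α = M.stateBisim := by
  refine Set.Subset.antisymm (M.subset_stateBisim_of_subset_Oop ?_) (M.stateBisim_subset_Oiter hR α)
  rw [← M.Oiter_add_one]
  exact heq.subset.trans (M.Oiter_antitone h (Order.add_one_le_of_lt hlt))

end Iterates

section Zhou

theorem Oiter_eventBisim_antitone {S L : Type*} [MeasurableSpace S] (M : LMP S L) :
    Antitone (M.Oiter M.eventBisim) :=
  M.Oiter_antitone M.Oop_eventBisim_subset

theorem exists_Oiter_eventBisim_eq {S : Type u} {L : Type*} [MeasurableSpace S] (M : LMP S L) :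
    ∃ α : Ordinal.{u}, M.Oiter M.eventBisim α = M.stateBisim := by
  by_contra! hne
  exact not_injective_of_ordinal _ (.of_lt_imp_ne fun α _ hlt heq =>
    hne α (M.Oiter_eq_stateBisim_of_lt_of_eq M.Oop_eventBisim_subset
      M.stateBisim_subset_eventBisim hlt heq))

theorem exists_isZhou {S : Type u} {L : Type*} [MeasurableSpace S] (M : LMP S L) :
    ∃ ζ : Ordinal.{u}, M.IsZhou ζ :=
  ⟨_, csInf_mem M.exists_Oiter_eventBisim_eq, fun _ => notMem_of_lt_csInf'⟩

variable {S L : Type*} [MeasurableSpace S] {M : LMP S L} {α ζ : Ordinal}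

theorem IsZhou.lt_iff (hζ : M.IsZhou ζ) :
    α < ζ ↔ ∃ p ∈ M.Oiter M.eventBisim α, p ∉ M.stateBisim := by
  refine ⟨fun hα => ?_, fun ⟨p, hp, hp'⟩ => ?_⟩
  · refine Set.not_subset.1 fun hsub => hζ.2 α hα (hsub.antisymm ?_)
    exact M.stateBisim_subset_Oiter M.stateBisim_subset_eventBisim α
  · contrapose! hp'
    rw [← hζ.1]
    exact M.Oiter_eventBisim_antitone hp' hp

theorem IsZhou.injOn_Oiter (hζ : M.IsZhou ζ) : (Set.Iio ζ).InjOn (M.Oiter M.eventBisim) :=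
  Set.injOn_iff_injective.2 <| .of_lt_imp_ne fun α _ hlt heq =>
    hζ.2 α α.2 (M.Oiter_eq_stateBisim_of_lt_of_eq M.Oop_eventBisim_subset
      M.stateBisim_subset_eventBisim hlt heq)

theorem IsZhou.card_le {S : Type u} {L : Type*} [MeasurableSpace S] {M : LMP S L}
    {ζ : Ordinal.{u}} (hζ : M.IsZhou ζ) : ζ.card ≤ Cardinal.mk (Set (S × S)) := by
  have h := Cardinal.lift_mk_le_lift_mk_of_injective hζ.injOn_Oiter.injective
  rwa [Cardinal.mk_Iio_ordinal, Cardinal.lift_lift, Cardinal.lift_le] at h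

end Zhou

theorem RClosed.preimage {S T : Type*} {f : S → T} {R : Set (S × S)} {Q : Set (T × T)}
    (h : ∀ s t, (s, t) ∈ R → (f s, f t) ∈ Q) {A : Set T} (hA : RClosed Q A) :
    RClosed R (f ⁻¹' A) :=
  fun _ hx _ hxs => hA hx (h _ _ hxs)

variable {S L T K : Type*} [MeasurableSpace S] [MeasurableSpace T] {M : LMP S L} {N : LMP T K}
  {f : S → T}

/-- `f` embeds `M` measurably into `N`: along `f`, each kernel of `M` is realised by a kernel of
`N`, whose remaining labels carry no information about the states of `M`. -/
structure IsSubprocess (M : LMP S L) (N : LMP T K) (f : S → T) : Prop where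
  measurableEmbedding : MeasurableEmbedding f
  exists_map (a : L) : ∃ k, ∀ s, N.τ k (f s) = (M.τ a s).map f
  map_or_const (k : K) : (∃ a, ∀ s, N.τ k (f s) = (M.τ a s).map f) ∨ ∃ μ, ∀ s, N.τ k (f s) = μ

theorem IsSubSigmaAlgebra.setOf_const_mem {Λ : Set (Set S)} (hΛ : IsSubSigmaAlgebra Λ) (p : Prop) :
    {_s : S | p} ∈ Λ := by
  by_cases hp : p
  · simpa [hp] using hΛ.compl_mem _ hΛ.empty_mem
  · simpa [hp] using hΛ.empty_mem

theorem IsSubSigmaAlgebra.setOf_preimage_mem {Λ : Set (Set S)} (hΛ : IsSubSigmaAlgebra Λ)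
    (f : S → T) : IsSubSigmaAlgebra {A : Set T | MeasurableSet A ∧ f ⁻¹' A ∈ Λ} where
  subset_meas _ hA := hA.1
  empty_mem := ⟨.empty, hΛ.empty_mem⟩
  compl_mem _ hA := ⟨hA.1.compl, hΛ.compl_mem _ hA.2⟩
  iUnion_mem A hA := by
    refine ⟨.iUnion fun n => (hA n).1, ?_⟩
    rw [Set.preimage_iUnion]
    exact hΛ.iUnion_mem _ fun n => (hA n).2

namespace IsSubprocess

theorem mem_Oop (hf : IsSubprocess M N f) {R : Set (S × S)} {Q : Set (T × T)}
    (h : ∀ s t, (s, t) ∈ R → (f s, f t) ∈ Q) {s t : S} (hst : (s, t) ∈ M.Oop R) :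
    (f s, f t) ∈ N.Oop Q := by
  intro k E hE
  rcases hf.map_or_const k with ⟨a, ha⟩ | ⟨μ, hμ⟩
  · have hmeas := hf.measurableEmbedding.measurable
    simp only [ha, Measure.map_apply hmeas hE.1]
    exact hst a _ ⟨hmeas hE.1, hE.2.preimage h⟩
  · simp only [hμ]

theorem mem_eventBisim (hf : IsSubprocess M N f) {s t : S} (hst : (s, t) ∈ M.eventBisim) :
    (f s, f t) ∈ N.eventBisim := by
  obtain ⟨Λ, hΛ, hstable, hst⟩ := hst
  have hmeas := hf.measurableEmbedding.measurable
  refine ⟨_, hΛ.setOf_preimage_mem f,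
    fun A hA q hq hq' k => ⟨N.measurableSet_lt_τ k hA.1 _, ?_⟩, fun A hA => hst _ hA.2⟩
  rcases hf.map_or_const k with ⟨a, ha⟩ | ⟨μ, hμ⟩
  · simp only [Set.preimage_ofPred_eq, ha, Measure.map_apply hmeas hA.1]
    exact hstable _ hA.2 q hq hq' a
  · simp only [Set.preimage_ofPred_eq, hμ]
    exact hΛ.setOf_const_mem _

theorem mem_Oiter (hf : IsSubprocess M N f) (α : Ordinal) {s t : S}
    (hst : (s, t) ∈ M.Oiter M.eventBisim α) : (f s, f t) ∈ N.Oiter N.eventBisim α := by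
  induction α using Ordinal.limitRecOn generalizing s t with
  | zero =>
    rw [Oiter_zero] at hst ⊢
    exact hf.mem_eventBisim hst
  | add_one α ih =>
    rw [Oiter_add_one] at hst ⊢
    exact hf.mem_Oop (fun _ _ => ih) hst
  | limit α hα ih =>
    rw [Oiter_limit _ _ hα, Set.mem_iInter₂] at hst ⊢
    exact fun β hβ => ih β hβ (hst β hβ)

theorem mem_stateBisim (hf : IsSubprocess M N f) (hrange : RClosed N.stateBisim (Set.range f))
    {s t : S} (hst : (f s, f t) ∈ N.stateBisim) : (s, t) ∈ M.stateBisim := by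
  suffices h : {p : S × S | (f p.1, f p.2) ∈ N.stateBisim} ⊆
      M.Oop {p | (f p.1, f p.2) ∈ N.stateBisim} from M.subset_stateBisim_of_subset_Oop h hst
  intro p hp a C hC
  have hclosed : f '' C ∈ sigmaCl N.stateBisim := by
    refine ⟨hf.measurableEmbedding.measurableSet_image.2 hC.1, ?_⟩
    rintro _ ⟨x, hx, rfl⟩ y hxy
    obtain ⟨z, rfl⟩ := hrange ⟨x, rfl⟩ hxy
    exact ⟨z, hC.2 hx hxy, rfl⟩
  obtain ⟨k, hk⟩ := hf.exists_map a
  have heq := N.stateBisim_subset_Oop hp k _ hclosed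
  simpa only [hk, hf.measurableEmbedding.map_apply,
    hf.measurableEmbedding.injective.preimage_image] using heq

end IsSubprocess

end LMP

theorem exists_not_nullMeasurableSet_of_countable_infinite {G : Type*} [AddCommGroup G]
    [MeasurableSpace G] [MeasurableAdd G] (μ : Measure G) [μ.IsAddLeftInvariant]
    [IsFiniteMeasure μ] [NeZero μ] (H : AddSubgroup G) [Countable H] [Infinite H] :
    ∃ V : Set G, ¬ NullMeasurableSet V μ := by
  refine ⟨Set.range (Quotient.out : G ⧸ H → G), fun hV => ?_⟩
  have hdom : IsAddFundamentalDomain H (Set.range (Quotient.out : G ⧸ H → G)) μ := by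
    refine IsAddFundamentalDomain.mk' hV fun x => ?_
    have hmem : -x + (x : G ⧸ H).out ∈ H := by
      rw [← QuotientAddGroup.eq, QuotientAddGroup.out_eq']
    refine ⟨⟨_, hmem⟩, ⟨(x : G ⧸ H), by simp [AddSubgroup.vadd_def]⟩, ?_⟩
    rintro ⟨g, hg⟩ ⟨q, hq⟩
    have hq' : q.out = g + x := hq
    obtain rfl : q = (x : G ⧸ H) := by
      rw [← QuotientAddGroup.out_eq' q, hq', QuotientAddGroup.eq]
      simpa [neg_add_rev, add_comm] using hg
    simp [hq']
  have hsum := hdom.measure_eq_tsum Set.univ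
  simp only [Set.vadd_set_univ, Set.univ_inter] at hsum
  by_cases hzero : μ (Set.range (Quotient.out : G ⧸ H → G)) = 0
  · simp [hzero, NeZero.ne μ] at hsum
  · rw [ENNReal.tsum_const_eq_top_of_ne_zero hzero] at hsum
    exact measure_ne_top μ _ hsum

theorem exists_not_nullMeasurableSet_unitAddCircle :
    ∃ V : Set UnitAddCircle, ¬ NullMeasurableSet V volume := by
  have hinf : ¬ IsOfFinAddOrder ((√2 : ℝ) : UnitAddCircle) := by
    rw [AddCircle.not_isOfFinAddOrder_iff_forall_rat_ne_div]
    intro q hq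
    exact irrational_sqrt_two ⟨q, by simpa using hq⟩
  have : Infinite (AddSubgroup.zmultiples ((√2 : ℝ) : UnitAddCircle)) :=
    (infinite_zmultiples.2 hinf).to_subtype
  exact exists_not_nullMeasurableSet_of_countable_infinite volume
    (AddSubgroup.zmultiples ((√2 : ℝ) : UnitAddCircle))

section Extension

variable {Y : Type*} [m0 : MeasurableSpace Y]

theorem isCaratheodory_restrict_of_inter_eq {μ : Measure Y} {W E F : Set Y} (hF : MeasurableSet F)
    (h : E ∩ W = F ∩ W) : (OuterMeasure.restrict W μ.toOuterMeasure).IsCaratheodory E := by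
  intro t
  have hinter : t ∩ E ∩ W = t ∩ W ∩ F := by
    rw [Set.inter_assoc, h, Set.inter_comm F, Set.inter_assoc]
  have hdiff : (t \ E) ∩ W = (t ∩ W) \ F := by
    ext x
    have := Set.ext_iff.1 h x
    simp only [Set.mem_inter_iff, Set.mem_sdiff] at this ⊢
    tauto
  simp only [OuterMeasure.restrict_apply, hinter, hdiff]
  exact (measure_inter_add_sdiff _ hF).symm

variable (μ : Measure Y)

theorem measure_inter_union_compl_toMeasurable [SFinite μ] (V : Set Y) {E : Set Y}
    (hE : MeasurableSet E) :
    μ (E ∩ (V ∪ (toMeasurable μ V)ᶜ)) = μ E := by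
  have hT := measurableSet_toMeasurable μ V
  have hinter : E ∩ (V ∪ (toMeasurable μ V)ᶜ) ∩ toMeasurable μ V = V ∩ E := by
    ext x
    have := @subset_toMeasurable _ _ μ V x
    simp only [Set.mem_inter_iff, Set.mem_union, Set.mem_compl_iff]
    tauto
  have hdiff : (E ∩ (V ∪ (toMeasurable μ V)ᶜ)) \ toMeasurable μ V = E \ toMeasurable μ V := by
    ext x
    simp only [Set.mem_inter_iff, Set.mem_union, Set.mem_compl_iff, Set.mem_sdiff]
    tauto
  rw [← measure_inter_add_sdiff _ hT, hinter, hdiff,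
    ← Measure.measure_toMeasurable_inter_of_sFinite hE, Set.inter_comm,
    measure_inter_add_sdiff _ hT]

-- The extension is the trace of `μ` on `V ∪ (toMeasurable μ V)ᶜ`, a set of full outer measure on
-- which `V` agrees with its measurable hull.
theorem exists_measure_sup_generateFrom_singleton [SFinite μ] (V : Set Y) :
    ∃ ν : Measure[m0 ⊔ MeasurableSpace.generateFrom {V}] Y,
      (∀ E, MeasurableSet[m0] E → ν E = μ E) ∧ ν V = μ V := by
  set W := V ∪ (toMeasurable μ V)ᶜ
  have hVW : V ∩ W = toMeasurable μ V ∩ W := by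
    ext x
    have := @subset_toMeasurable _ _ μ V x
    simp only [W, Set.mem_inter_iff, Set.mem_union, Set.mem_compl_iff]
    tauto
  have hle : m0 ⊔ MeasurableSpace.generateFrom {V} ≤
      (OuterMeasure.restrict W μ.toOuterMeasure).caratheodory := by
    refine sup_le (fun E hE => isCaratheodory_restrict_of_inter_eq hE rfl)
      (MeasurableSpace.generateFrom_le ?_)
    intro E hE
    rw [Set.mem_singleton_iff.1 hE]
    exact isCaratheodory_restrict_of_inter_eq (measurableSet_toMeasurable μ V) hVW
  have happly {E : Set Y} (hE : MeasurableSet[m0 ⊔ MeasurableSpace.generateFrom {V}] E) :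
      @OuterMeasure.toMeasure Y (m0 ⊔ MeasurableSpace.generateFrom {V}) _ hle E = μ (E ∩ W) := by
    rw [@toMeasure_apply Y (m0 ⊔ MeasurableSpace.generateFrom {V}) _ hle _ hE,
      OuterMeasure.restrict_apply]
    rfl
  refine ⟨@OuterMeasure.toMeasure Y (m0 ⊔ MeasurableSpace.generateFrom {V}) _ hle,
    fun E hE => ?_, ?_⟩
  · rw [happly (le_sup_left (a := m0) _ hE), measure_inter_union_compl_toMeasurable μ V hE]
  · rw [happly (le_sup_right (a := m0) _ (MeasurableSpace.measurableSet_generateFrom rfl)),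
      Set.inter_eq_left.2 Set.subset_union_left]

theorem nullMeasurableSet_of_measure_add_measure_compl_le [IsFiniteMeasure μ] {V : Set Y}
    (h : μ V + μ Vᶜ ≤ μ Set.univ) : NullMeasurableSet V μ := by
  have hT := measurableSet_toMeasurable μ V
  have hcover : toMeasurable μ V ∪ toMeasurable μ Vᶜ = Set.univ :=
    Set.eq_univ_of_univ_subset <| (Set.union_compl_self V).symm.subset.trans
      (Set.union_subset_union (subset_toMeasurable μ V) (subset_toMeasurable μ Vᶜ))
  have hnull : μ (toMeasurable μ V ∩ toMeasurable μ Vᶜ) = 0 := by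
    have hsum := measure_union_add_inter (μ := μ) (toMeasurable μ V)
      (measurableSet_toMeasurable μ Vᶜ)
    rw [hcover, measure_toMeasurable, measure_toMeasurable] at hsum
    have hle : μ Set.univ + μ (toMeasurable μ V ∩ toMeasurable μ Vᶜ) ≤ μ Set.univ + 0 := by
      rwa [hsum, add_zero]
    exact nonpos_iff_eq_zero.1 ((ENNReal.add_le_add_iff_left (measure_ne_top μ _)).1 hle)
  refine hT.nullMeasurableSet.congr (ae_eq_set.2 ⟨measure_mono_null ?_ hnull, ?_⟩)
  · exact fun x hx => ⟨hx.1, subset_toMeasurable μ Vᶜ hx.2⟩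
  · rw [Set.sdiff_eq_empty.2 (subset_toMeasurable μ V), measure_empty]

theorem generateFrom_singleton_compl {Y : Type*} (V : Set Y) :
    MeasurableSpace.generateFrom {Vᶜ} = MeasurableSpace.generateFrom {V} := by
  refine le_antisymm (MeasurableSpace.generateFrom_le ?_) (MeasurableSpace.generateFrom_le ?_)
  · rintro _ rfl
    exact (MeasurableSpace.measurableSet_generateFrom (Set.mem_singleton V)).compl
  · rintro _ rfl
    exact MeasurableSet.of_compl (MeasurableSpace.measurableSet_generateFrom rfl)

theorem exists_ne_extensions_of_not_nullMeasurableSet [IsFiniteMeasure μ] {V : Set Y}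
    (hV : ¬ NullMeasurableSet V μ) :
    ∃ ν : Bool → Measure[m0 ⊔ MeasurableSpace.generateFrom {V}] Y,
      (∀ b E, MeasurableSet[m0] E → ν b E = μ E) ∧ ν true ≠ ν false := by
  obtain ⟨ν, hν, hνV⟩ := exists_measure_sup_generateFrom_singleton μ V
  have hcompl := exists_measure_sup_generateFrom_singleton μ Vᶜ
  rw [generateFrom_singleton_compl] at hcompl
  obtain ⟨ν', hν', hνV'⟩ := hcompl
  refine ⟨fun b => if b then ν else ν', fun b E hE => ?_, fun (heq : ν = ν') => hV ?_⟩
  · cases b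
    exacts [hν' E hE, hν E hE]
  · refine nullMeasurableSet_of_measure_add_measure_compl_le μ ?_
    have hVmeas := le_sup_right (a := m0) _ (MeasurableSpace.measurableSet_generateFrom
      (Set.mem_singleton V))
    rw [← hνV, ← hνV', ← heq, @measure_add_measure_compl Y _ ν V hVmeas, hν _ .univ]

end Extension

theorem separableMeasurableSpace_iff {S : Type*} [MeasurableSpace S] :
    SeparableMeasurableSpace S ↔
      MeasurableSpace.CountablyGenerated S ∧ MeasurableSpace.SeparatesPoints S := by
  refine ⟨fun ⟨⟨U, hU, hgen⟩, hsep⟩ => ⟨⟨U, hU, hgen.symm⟩, ⟨fun s t hst => ?_⟩⟩,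
    fun ⟨⟨U, hU, hgen⟩, _⟩ => ⟨⟨U, hU, hgen.symm⟩, fun s t hst => ?_⟩⟩
  · by_contra hne
    obtain ⟨A, hA, hs, ht⟩ := hsep s t hne
    exact ht (hst A hA hs)
  · exact MeasurableSpace.exists_measurableSet_of_ne hst

theorem separableMeasurableSpace_of_comap_eq {S T : Type*} [m : MeasurableSpace S]
    [MeasurableSpace T] [MeasurableSpace.CountablyGenerated T] [MeasurableSpace.SeparatesPoints T]
    {φ : S → T} (hinj : Function.Injective φ) (hφ : MeasurableSpace.comap φ inferInstance = m) :
    SeparableMeasurableSpace S := by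
  rw [separableMeasurableSpace_iff]
  refine ⟨hφ ▸ .comap φ, ⟨fun s t hst => hinj (MeasurableSpace.separatesPoints_def fun A hA => ?_)⟩⟩
  exact hst (φ ⁻¹' A) (hφ ▸ ⟨A, hA, rfl⟩)

theorem SeparableMeasurableSpace.exists_comap_eq {S : Type*} [m : MeasurableSpace S]
    (hS : SeparableMeasurableSpace S) :
    ∃ φ : S → ℕ → Bool, Function.Injective φ ∧ MeasurableSpace.comap φ inferInstance = m := by
  obtain ⟨_, _⟩ := separableMeasurableSpace_iff.1 hS
  obtain ⟨s, ⟨e⟩⟩ := MeasurableSpace.measurableEquiv_nat_bool_of_countablyGenerated S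
  refine ⟨fun x => e x, Subtype.val_injective.comp e.injective, ?_⟩
  exact MeasurableSpace.comap_comp.symm.trans e.measurableEmbedding.comap_eq

theorem measurableSet_sigma_iff {ι : Type*} {X : ι → Type*} [∀ i, MeasurableSpace (X i)]
    {E : Set (Σ i, X i)} : MeasurableSet E ↔ ∀ i, MeasurableSet (Sigma.mk i ⁻¹' E) :=
  MeasurableSpace.measurableSet_iInf

theorem SeparableMeasurableSpace.sigma {ι : Type*} [Countable ι] {X : ι → Type*}
    [∀ i, MeasurableSpace (X i)] (hX : ∀ i, SeparableMeasurableSpace (X i)) :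
    SeparableMeasurableSpace (Σ i, X i) := by
  choose φ hinj hφ using fun i => (hX i).exists_comap_eq
  let _ : MeasurableSpace ι := ⊤
  have : DiscreteMeasurableSpace ι := ⟨fun _ => trivial⟩
  have hφm (i : ι) : Measurable (φ i) := measurable_iff_comap_le.2 (hφ i).le
  refine separableMeasurableSpace_of_comap_eq (T := ι × (ℕ → Bool))
    (φ := fun x => (x.1, φ x.1 x.2)) ?_ (le_antisymm ?_ fun E hE => ?_)
  · rintro ⟨i, x⟩ ⟨j, y⟩ hxy
    obtain ⟨rfl, hxy⟩ := Prod.mk.inj hxy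
    exact congrArg _ (hinj i hxy)
  · refine measurable_iff_comap_le.1 fun A hA => measurableSet_sigma_iff.2 fun i => ?_
    exact measurable_const.prodMk (hφm i) hA
  · choose B hB hBE using fun i => (hφ i).ge _ (measurableSet_sigma_iff.1 hE i)
    refine ⟨⋃ i, {i} ×ˢ B i, .iUnion fun i => (measurableSet_singleton i).prod (hB i), ?_⟩
    ext ⟨i, x⟩
    simpa using Set.ext_iff.1 (hBE i) x

theorem SeparableMeasurableSpace.sum {S T : Type*} [MeasurableSpace S] [MeasurableSpace T]
    (hS : SeparableMeasurableSpace S) (hT : SeparableMeasurableSpace T) :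
    SeparableMeasurableSpace (S ⊕ T) := by
  obtain ⟨φ, hφinj, hφ⟩ := hS.exists_comap_eq
  obtain ⟨ψ, hψinj, hψ⟩ := hT.exists_comap_eq
  refine separableMeasurableSpace_of_comap_eq (T := Bool × (ℕ → Bool))
    (φ := Sum.elim (fun x => (true, φ x)) fun y => (false, ψ y)) ?_ (le_antisymm ?_ fun E hE => ?_)
  · refine .sumElim (fun x y h => ?_) (fun x y h => ?_) fun x y h => ?_
    · exact hφinj (Prod.mk.inj h).2
    · exact hψinj (Prod.mk.inj h).2
    · exact Bool.true_eq_false_eq_False (Prod.mk.inj h).1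
  · have hφm : Measurable φ := measurable_iff_comap_le.2 hφ.le
    have hψm : Measurable ψ := measurable_iff_comap_le.2 hψ.le
    exact measurable_iff_comap_le.1
      ((measurable_const.prodMk hφm).sumElim (measurable_const.prodMk hψm))
  · rw [measurableSet_sum_iff] at hE
    obtain ⟨B, hB, hBE⟩ := hφ.ge _ hE.1
    obtain ⟨C, hC, hCE⟩ := hψ.ge _ hE.2
    refine ⟨{true} ×ˢ B ∪ {false} ×ˢ C,
      ((measurableSet_singleton _).prod hB).union ((measurableSet_singleton _).prod hC), ?_⟩
    ext (x | y)
    · simpa using Set.ext_iff.1 hBE x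
    · simpa using Set.ext_iff.1 hCE y

theorem exists_ne_measures_map_eq : ∃ (Y : Type) (_ : MeasurableSpace Y) (code : Y → ℕ → Bool)
    (ν : Bool → Measure Y), SeparableMeasurableSpace Y ∧ Measurable code ∧
      Function.Injective code ∧ (∀ b, ν b Set.univ ≤ 1) ∧
      (ν true).map code = (ν false).map code ∧ ν true ≠ ν false := by
  obtain ⟨V, hV⟩ := exists_not_nullMeasurableSet_unitAddCircle
  obtain ⟨ν, hν, hne⟩ := exists_ne_extensions_of_not_nullMeasurableSet volume hV
  let m : MeasurableSpace UnitAddCircle := inferInstance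
  have hcode : Measurable[m ⊔ MeasurableSpace.generateFrom {V}]
      (MeasurableSpace.mapNatBool UnitAddCircle) :=
    (MeasurableSpace.measurable_mapNatBool _).mono le_sup_left le_rfl
  refine ⟨UnitAddCircle, m ⊔ MeasurableSpace.generateFrom {V},
    MeasurableSpace.mapNatBool UnitAddCircle, ν, ?_, hcode,
    MeasurableSpace.injective_mapNatBool _, fun b => ?_, ?_, hne⟩
  · rw [@separableMeasurableSpace_iff _ (m ⊔ MeasurableSpace.generateFrom {V})]
    refine ⟨.sup inferInstance ?_, .mono (m := m) le_sup_left⟩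
    exact @MeasurableSpace.CountablyGenerated.mk _ (_) ⟨{V}, Set.countable_singleton V, rfl⟩
  · rw [hν b _ .univ, UnitAddCircle.measure_univ]
  · ext E hE
    rw [Measure.map_apply hcode hE, Measure.map_apply hcode hE, hν, hν]
    all_goals exact MeasurableSpace.measurable_mapNatBool _ hE

theorem measurableEmbedding_inl {S T : Type*} [MeasurableSpace S] [MeasurableSpace T] :
    MeasurableEmbedding (Sum.inl : S → S ⊕ T) where
  injective := Sum.inl_injective
  measurable := measurable_inl
  measurableSet_image' _ := measurableSet_inl_image.2

theorem measurableEmbedding_inr {S T : Type*} [MeasurableSpace S] [MeasurableSpace T] :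
    MeasurableEmbedding (Sum.inr : T → S ⊕ T) where
  injective := Sum.inr_injective
  measurable := measurable_inr
  measurableSet_image' _ := measurableSet_inr_image.2

theorem measurableEmbedding_sigmaMk {ι : Type*} {X : ι → Type*} [∀ i, MeasurableSpace (X i)]
    (i : ι) : MeasurableEmbedding (Sigma.mk i : X i → Σ j, X j) where
  injective := sigma_mk_injective
  measurable _ hE := measurableSet_sigma_iff.1 hE i
  measurableSet_image' E hE := measurableSet_sigma_iff.2 fun j => by
    rcases eq_or_ne i j with rfl | hij
    · rwa [Set.preimage_image_eq _ sigma_mk_injective]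
    · rw [Set.preimage_image_sigmaMk_of_ne hij.symm]
      exact .empty

section ExtendByZero

variable {X T : Type*} [MeasurableSpace T] {f : X → T} {κ : X → Measure T}

theorem extend_zero_apply (f : X → T) (κ : X → Measure T) (t : T) (E : Set T) :
    Function.extend f κ 0 t E = Function.extend f (fun x => κ x E) 0 t :=
  Function.apply_extend (fun μ : Measure T => μ E) f 0 t

theorem extend_zero_univ_le_one (hκ : ∀ x, κ x Set.univ ≤ 1) (t : T) :
    Function.extend f κ 0 t Set.univ ≤ 1 := by
  by_cases ht : ∃ x, f x = t
  · simpa only [Function.extend, dif_pos ht] using hκ _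
  · simp [Function.extend_apply' _ _ _ ht]

theorem measurable_extend_zero [MeasurableSpace X] (hf : MeasurableEmbedding f) {E : Set T}
    (hκ : Measurable fun x => κ x E) : Measurable fun t => Function.extend f κ 0 t E := by
  simp only [extend_zero_apply]
  exact hf.measurable_extend hκ measurable_const

theorem setOf_extend_zero_univ_ne_zero (hf : Function.Injective f) (hκ : ∀ x, κ x Set.univ ≠ 0) :
    {t | Function.extend f κ 0 t Set.univ ≠ 0} = Set.range f := by
  ext t
  by_cases ht : ∃ x, f x = t
  · obtain ⟨x, rfl⟩ := ht
    simpa [hf.extend_apply] using hκ x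
  · simpa [Function.extend_apply' _ _ _ ht] using ht

end ExtendByZero

/-- The ingredients of the glued process: component processes `comp m` with two chosen states
`point m true` and `point m false`, a space `Y` whose points carry a sequence of bits, and two
subprobability measures on `Y`. -/
structure GlueData (S L : ℕ → Type*) (Y : Type*) [∀ m, MeasurableSpace (S m)]
    [MeasurableSpace Y] where
  comp (m : ℕ) : LMP (S m) (L m)
  point (m : ℕ) : Bool → S m
  code : Y → ℕ → Bool
  measurable_code : Measurable code
  ν : Bool → Measure Y
  ν_univ_le_one (b : Bool) : ν b Set.univ ≤ 1

namespace GlueData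

open LMP

/-- States of the glued process: the component states, the points of `Y`, and two roots. -/
abbrev State (S : ℕ → Type*) (Y : Type*) : Type _ := (Σ m, S m) ⊕ Y ⊕ Bool

/-- Labels of the glued process: `step` runs a component, `mark m` tells the states of the `m`-th
component apart from all others, `probe m` moves from `y : Y` to the chosen state of the `m`-th
component given by the `m`-th bit of `y`, and `launch` moves from a root into `Y`. -/
inductive Label (L : ℕ → Type*)
  | step (m : ℕ) (a : L m)
  | mark (m : ℕ)
  | probe (m : ℕ)
  | launch

instance {L : ℕ → Type*} [∀ m, Countable (L m)] : Countable (Label L) := by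
  let g : (Σ m, L m) ⊕ ℕ ⊕ ℕ ⊕ Unit → Label L
    | .inl ⟨m, a⟩ => .step m a
    | .inr (.inl m) => .mark m
    | .inr (.inr (.inl m)) => .probe m
    | .inr (.inr (.inr _)) => .launch
  have hg : Function.Surjective g
    | .step m a => ⟨.inl ⟨m, a⟩, rfl⟩
    | .mark m => ⟨.inr (.inl m), rfl⟩
    | .probe m => ⟨.inr (.inr (.inl m)), rfl⟩
    | .launch => ⟨.inr (.inr (.inr ())), rfl⟩
  exact hg.countable

variable {S L : ℕ → Type*} {Y : Type*}

/-- The inclusion of the `m`-th component into the glued state space. -/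
abbrev component (m : ℕ) (s : S m) : State S Y := .inl ⟨m, s⟩

/-- The inclusion of `Y` into the glued state space. -/
abbrev node (y : Y) : State S Y := .inr (.inl y)

/-- The two roots of the glued state space. -/
abbrev root (b : Bool) : State S Y := .inr (.inr b)

variable [∀ m, MeasurableSpace (S m)] [MeasurableSpace Y]

theorem separableMeasurableSpace_state (hS : ∀ m, SeparableMeasurableSpace (S m))
    (hY : SeparableMeasurableSpace Y) : SeparableMeasurableSpace (State S Y) :=
  .sum (.sigma hS) (.sum hY (separableMeasurableSpace_iff.2 ⟨inferInstance, inferInstance⟩))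

theorem measurableEmbedding_component (m : ℕ) :
    MeasurableEmbedding (component m : S m → State S Y) :=
  measurableEmbedding_inl.comp (measurableEmbedding_sigmaMk m)

theorem measurableEmbedding_node : MeasurableEmbedding (node : Y → State S Y) :=
  measurableEmbedding_inr.comp measurableEmbedding_inl

theorem measurableEmbedding_root : MeasurableEmbedding (root : Bool → State S Y) :=
  measurableEmbedding_inr.comp measurableEmbedding_inr

variable (G : GlueData S L Y)

/-- The kernels of the glued process; each label acts on one piece of the state space and is
disabled elsewhere. -/
noncomputable def kernel : Label L → State S Y → Measure (State S Y)
  | .step m a =>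
    Function.extend (component m) (fun s => ((G.comp m).τ a s).map (component m)) 0
  | .mark m => Function.extend (component m) (fun _ => Measure.dirac (root true)) 0
  | .probe m =>
    Function.extend node (fun y => Measure.dirac (component m (G.point m (G.code y m)))) 0
  | .launch => Function.extend root (fun b => (G.ν b).map node) 0

theorem kernel_univ_le_one (l : Label L) (x : State S Y) : G.kernel l x Set.univ ≤ 1 := by
  cases l <;> refine extend_zero_univ_le_one (fun z => ?_) x
  case step m a =>
    rw [Measure.map_apply (measurableEmbedding_component m).measurable .univ]
    exact (G.comp m).prob_le_one a z
  case launch =>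
    rw [Measure.map_apply measurableEmbedding_node.measurable .univ]
    exact G.ν_univ_le_one z
  all_goals exact measure_univ.le

theorem measurable_probe (m : ℕ) (E : Set (State S Y)) : Measurable fun x : ℕ → Bool =>
    Measure.dirac (component m (G.point m (x m)) : State S Y) E :=
  (measurable_of_countable fun b => Measure.dirac (component m (G.point m b) : State S Y) E).comp
    (measurable_pi_apply m)

theorem measurable_kernel (l : Label L) {E : Set (State S Y)} (hE : MeasurableSet E) :
    Measurable fun x => G.kernel l x E := by
  cases l with
  | step m a =>
    have hf := measurableEmbedding_component (S := S) (Y := Y) m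
    refine measurable_extend_zero hf ?_
    simp only [hf.map_apply]
    exact (G.comp m).measurable_eval a _ (hf.measurable hE)
  | mark m => exact measurable_extend_zero (measurableEmbedding_component m) measurable_const
  | probe m =>
    exact measurable_extend_zero measurableEmbedding_node
      ((G.measurable_probe m E).comp G.measurable_code)
  | launch => exact measurable_extend_zero measurableEmbedding_root (measurable_of_countable _)

/-- The glued process. -/
noncomputable def process : LMP (State S Y) (Label L) where
  τ := G.kernel
  prob_le_one := G.kernel_univ_le_one
  measurable_eval l _ := G.measurable_kernel l

theorem process_τ_step (m : ℕ) (a : L m) (s : S m) :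
    G.process.τ (.step m a) (component m s) = ((G.comp m).τ a s).map (component m) := by
  simp only [process, kernel, (measurableEmbedding_component m).injective.extend_apply]

theorem process_τ_probe (m : ℕ) (y : Y) :
    G.process.τ (.probe m) (node y) = Measure.dirac (component m (G.point m (G.code y m))) := by
  simp only [process, kernel, measurableEmbedding_node.injective.extend_apply]

theorem process_τ_launch (b : Bool) : G.process.τ .launch (root b) = (G.ν b).map node := by
  simp only [process, kernel, measurableEmbedding_root.injective.extend_apply]

theorem process_τ_component_of_ne_step {m : ℕ} {l : Label L} (hl : ∀ a, l ≠ .step m a) (s t : S m) :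
    G.process.τ l (component m s) = G.process.τ l (component m t) := by
  rcases l with ⟨k, a⟩ | k | k | _
  · have hk : k ≠ m := by rintro rfl; exact hl a rfl
    simp [process, kernel, hk]
  · rcases eq_or_ne k m with rfl | hk
    · simp [process, kernel, (measurableEmbedding_component k).injective.extend_apply]
    · simp [process, kernel, hk]
  · simp [process, kernel]
  · simp [process, kernel]

theorem process_τ_node_of_ne_probe {l : Label L} (hl : ∀ m, l ≠ .probe m) (y : Y) :
    G.process.τ l (node y) = 0 := by
  rcases l with _ | _ | m | _
  case probe => exact absurd rfl (hl m)
  all_goals simp [process, kernel]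

theorem process_τ_root_of_ne_launch {l : Label L} (hl : l ≠ .launch) (b : Bool) :
    G.process.τ l (root b) = 0 := by
  rcases l with _ | _ | _ | _
  case launch => exact absurd rfl hl
  all_goals simp [process, kernel]

theorem isSubprocess_component (m : ℕ) : IsSubprocess (G.comp m) G.process (component m) where
  measurableEmbedding := measurableEmbedding_component m
  exists_map a := ⟨.step m a, G.process_τ_step m a⟩
  map_or_const l := by
    by_cases hl : ∃ a, l = .step m a
    · obtain ⟨a, rfl⟩ := hl
      exact .inl ⟨a, G.process_τ_step m a⟩
    · exact .inr ⟨_, fun s =>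
        G.process_τ_component_of_ne_step (not_exists.1 hl) s (G.point m true)⟩

theorem rClosed_range_component (m : ℕ) :
    RClosed G.process.stateBisim (Set.range (component m)) := by
  rw [← setOf_extend_zero_univ_ne_zero (measurableEmbedding_component m).injective
    (κ := fun _ => Measure.dirac (root true)) fun _ => (measure_univ.trans_ne one_ne_zero)]
  exact G.process.rClosed_setOf_τ_univ_ne_zero (.mark m)

theorem rClosed_range_node : RClosed G.process.stateBisim (Set.range node) := by
  rw [← setOf_extend_zero_univ_ne_zero measurableEmbedding_node.injective
    (κ := fun y => Measure.dirac (component 0 (G.point 0 (G.code y 0))))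
    fun _ => (measure_univ.trans_ne one_ne_zero)]
  exact G.process.rClosed_setOf_τ_univ_ne_zero (.probe 0)

section Iterates

variable {R : Set (State S Y × State S Y)} {y y' : Y}

theorem node_mem_Oop (hR : ∀ m, G.code y m ≠ G.code y' m →
      ∀ b, (component m (G.point m b), component m (G.point m !b)) ∈ R) :
    (node y, node y') ∈ G.process.Oop R := by
  intro l E hE
  by_cases hl : ∃ m, l = .probe m
  · obtain ⟨m, rfl⟩ := hl
    simp only [process_τ_probe]
    by_cases hy : G.code y m = G.code y' m
    · rw [hy]
    · rw [dirac_apply_eq_dirac_apply_iff hE.1, Bool.eq_not_of_ne (Ne.symm hy)]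
      exact ⟨fun h => hE.2 h (hR m hy _), fun h => by simpa using hE.2 h (hR m hy _)⟩
  · simp only [G.process_τ_node_of_ne_probe (not_exists.1 hl)]

theorem ν_eq_of_code_eq (hν : (G.ν true).map G.code = (G.ν false).map G.code) {n : ℕ} {A : Set Y}
    (hA : ∀ y y', (∀ m < n, G.code y m = G.code y' m) → y ∈ A → y' ∈ A) :
    G.ν true A = G.ν false A := by
  let π : (ℕ → Bool) → Fin n → Bool := fun x i => x i
  have hπ : Measurable π := measurable_pi_lambda _ fun i => measurable_pi_apply _
  have hA' : G.code ⁻¹' (π ⁻¹' ((π ∘ G.code) '' A)) = A := by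
    refine (Set.subset_preimage_image (π ∘ G.code) A).antisymm' ?_
    rintro y' ⟨y, hy, hyy'⟩
    exact hA y y' (fun m hm => congrFun hyy' ⟨m, hm⟩) hy
  have hmeas : MeasurableSet (π ⁻¹' ((π ∘ G.code) '' A)) := hπ (Set.toFinite _).measurableSet
  rw [← hA', ← Measure.map_apply G.measurable_code hmeas, hν,
    Measure.map_apply G.measurable_code hmeas]

theorem root_mem_Oop (hν : (G.ν true).map G.code = (G.ν false).map G.code) {n : ℕ}
    (hR : ∀ y y', (∀ m < n, G.code y m = G.code y' m) → (node y, node y') ∈ R) :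
    (root true, root false) ∈ G.process.Oop R := by
  intro l E hE
  by_cases hl : l = .launch
  · subst hl
    simp only [process_τ_launch, measurableEmbedding_node.map_apply]
    exact G.ν_eq_of_code_eq hν fun y y' hy h => hE.2 h (hR y y' hy)
  · simp only [G.process_τ_root_of_ne_launch hl]

theorem root_mem_Oiter (hν : (G.ν true).map G.code = (G.ν false).map G.code) {α : Ordinal} {n : ℕ}
    (h : ∀ m ≥ n,
      (G.point m true, G.point m false) ∈ (G.comp m).Oiter (G.comp m).eventBisim α) :
    (root true, root false) ∈ G.process.Oiter G.process.eventBisim (α + 1 + 1) := by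
  rw [Oiter_add_one]
  refine G.root_mem_Oop hν (n := n) fun y y' hy => ?_
  rw [Oiter_add_one]
  refine G.node_mem_Oop fun m hm b => (G.isSubprocess_component m).mem_Oiter α ?_
  have hmem := h m (not_lt.1 fun hlt => hm (hy m hlt))
  cases b
  · exact (G.comp m).Oiter_symm (fun _ _ => (G.comp m).eventBisim_symm) α hmem
  · exact hmem

end Iterates

theorem root_mem_eventBisim (hν : (G.ν true).map G.code = (G.ν false).map G.code) :
    (root true, root false) ∈ G.process.eventBisim := by
  have hΛ := isSubSigmaAlgebra_of_le G.measurable_code.comap_le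
  refine G.process.mem_eventBisim_of_mem_relT (hΛ.setOf_preimage_mem node)
    (fun E hE q _ _ l => ?_) ?_
  · refine ⟨G.process.measurableSet_lt_τ l hE.1 _, ?_⟩
    rw [Set.preimage_ofPred_eq]
    by_cases hl : ∃ m, l = .probe m
    · obtain ⟨m, rfl⟩ := hl
      simp only [process_τ_probe]
      exact ⟨_, measurableSet_lt measurable_const (G.measurable_probe m E), rfl⟩
    · simp only [G.process_τ_node_of_ne_probe (not_exists.1 hl)]
      exact hΛ.setOf_const_mem _
  · rintro l E ⟨-, B, hB, hBE⟩
    by_cases hl : l = .launch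
    · subst hl
      simp only [process_τ_launch, measurableEmbedding_node.map_apply, ← hBE]
      rw [← Measure.map_apply G.measurable_code hB, hν, Measure.map_apply G.measurable_code hB]
    · simp only [G.process_τ_root_of_ne_launch hl]

theorem eq_of_node_mem_stateBisim (hcode : Function.Injective G.code)
    (hpoint : ∀ m, (G.point m true, G.point m false) ∉ (G.comp m).stateBisim) {y y' : Y}
    (h : (node y, node y') ∈ G.process.stateBisim) : y = y' := by
  refine hcode (funext fun m => ?_)
  have hmem := (G.isSubprocess_component m).mem_stateBisim (G.rClosed_range_component m)
    (G.process.mem_stateBisim_of_τ_eq_dirac h (G.process_τ_probe m y) (G.process_τ_probe m y'))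
  cases hy : G.code y m <;> cases hy' : G.code y' m <;> rw [hy, hy'] at hmem
  · exact absurd ((G.comp m).stateBisim_symm hmem) (hpoint m)
  · exact absurd hmem (hpoint m)

theorem root_notMem_stateBisim (hcode : Function.Injective G.code)
    (hpoint : ∀ m, (G.point m true, G.point m false) ∉ (G.comp m).stateBisim)
    (hν : G.ν true ≠ G.ν false) : (root true, root false) ∉ G.process.stateBisim := by
  refine fun h => hν (Measure.ext fun V hV => ?_)
  have hclosed : node '' V ∈ sigmaCl G.process.stateBisim := by
    refine ⟨measurableEmbedding_node.measurableSet_image.2 hV, ?_⟩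
    rintro _ ⟨y, hy, rfl⟩ x hx
    obtain ⟨y', rfl⟩ := G.rClosed_range_node ⟨y, rfl⟩ hx
    exact ⟨y, hy, congrArg node (G.eq_of_node_mem_stateBisim hcode hpoint hx)⟩
  have heq := G.process.stateBisim_subset_Oop h .launch _ hclosed
  simpa only [process_τ_launch, measurableEmbedding_node.map_apply,
    measurableEmbedding_node.injective.preimage_image] using heq

end GlueData

theorem exists_separable_glued_process {S L : ℕ → Type} [∀ m, MeasurableSpace (S m)]
    [∀ m, Countable (L m)] (M : ∀ m, LMP (S m) (L m)) (point : ∀ m, Bool → S m)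
    (hS : ∀ m, SeparableMeasurableSpace (S m))
    (hpoint : ∀ m, (point m true, point m false) ∉ (M m).stateBisim) :
    ∃ (T : Type) (_ : MeasurableSpace T) (K : Type) (_ : Countable K) (N : LMP T K) (p : T × T),
      SeparableMeasurableSpace T ∧ p ∈ N.eventBisim ∧ p ∉ N.stateBisim ∧
      ∀ (α : Ordinal.{0}) n,
        (∀ m ≥ n, (point m true, point m false) ∈ (M m).Oiter (M m).eventBisim α) →
          p ∈ N.Oiter N.eventBisim (α + 1 + 1) := by
  obtain ⟨Y, _, code, ν, hY, hcode, hinj, hν_le, hν_map, hν_ne⟩ := exists_ne_measures_map_eq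
  let G : GlueData S L Y := ⟨M, point, code, hcode, ν, hν_le⟩
  exact ⟨_, _, _, inferInstance, G.process, (GlueData.root true, GlueData.root false),
    GlueData.separableMeasurableSpace_state hS hY,
    G.root_mem_eventBisim hν_map, G.root_notMem_stateBisim hinj hpoint hν_ne,
    fun _ _ => G.root_mem_Oiter hν_map⟩

theorem exists_mem_zhouOrdinals_lt_iff {α : Ordinal.{0}} :
    (∃ z ∈ zhouOrdinals, α < z) ↔
      ∃ (S : Type) (_ : MeasurableSpace S) (L : Type) (_ : Countable L) (M : LMP S L),
        SeparableMeasurableSpace S ∧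
          ∃ s t, (s, t) ∈ M.Oiter M.eventBisim α ∧ (s, t) ∉ M.stateBisim := by
  constructor
  · rintro ⟨z, ⟨⟨S, mS, L, cL, M⟩, hS, hz⟩, hα⟩
    obtain ⟨⟨s, t⟩, hst⟩ := hz.lt_iff.1 hα
    exact ⟨S, mS, L, cL, M, hS, s, t, hst⟩
  · rintro ⟨S, mS, L, cL, M, hS, s, t, hst⟩
    obtain ⟨z, hz⟩ := M.exists_isZhou
    exact ⟨z, ⟨⟨S, mS, L, cL, M⟩, hS, hz⟩, hz.lt_iff.2 ⟨(s, t), hst⟩⟩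

theorem exists_mem_zhouOrdinals_iSup_lt_of_monotone {γ : ℕ → Ordinal.{0}} (hmono : Monotone γ)
    (hγ : ∀ m, ∃ z ∈ zhouOrdinals, γ m < z) : ∃ z ∈ zhouOrdinals, ⨆ m, (γ m + 1) < z := by
  simp only [exists_mem_zhouOrdinals_lt_iff] at hγ ⊢
  choose S _ L _ M hS s t hst hst' using hγ
  obtain ⟨T, mT, K, cK, N, p, hT, hp, hp', hroots⟩ :=
    exists_separable_glued_process M (fun m b => bif b then s m else t m) hS hst'
  refine ⟨T, mT, K, cK, N, hT, p.1, p.2, ?_, hp'⟩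
  refine N.mem_Oiter_iSup N.Oop_eventBisim_subset hp fun n => ?_
  exact N.Oiter_eventBisim_antitone le_self_add <|
    hroots (γ n) n fun m hm => (M m).Oiter_eventBisim_antitone (hmono hm) (hst m)

theorem exists_mem_zhouOrdinals_iSup_lt {γ : ℕ → Ordinal.{0}}
    (hγ : ∀ m, ∃ z ∈ zhouOrdinals, γ m < z) : ∃ z ∈ zhouOrdinals, ⨆ m, (γ m + 1) < z := by
  obtain ⟨z, hz, hlt⟩ := exists_mem_zhouOrdinals_iSup_lt_of_monotone (partialSups_monotone γ)
    fun m => by obtain ⟨k, -, hk⟩ := exists_partialSups_eq γ m; exact hk ▸ hγ k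
  refine ⟨z, hz, lt_of_le_of_lt (Ordinal.iSup_le fun m => ?_) hlt⟩
  exact (add_le_add_left (le_partialSups γ m) 1).trans
    (Ordinal.le_iSup (fun m => partialSups γ m + 1) m)

/-- The process on two states in which one state loops and the other is disabled: a component
with non-bisimilar states, from which a first process with positive Zhou ordinal is glued. -/
noncomputable def loopProcess : LMP Bool Unit where
  τ _ b := if b then Measure.dirac true else 0
  prob_le_one _ b := by cases b <;> simp
  measurable_eval _ _ _ := measurable_of_countable _

theorem notMem_stateBisim_loopProcess : (true, false) ∉ loopProcess.stateBisim := fun h => by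
  simpa [loopProcess] using loopProcess.measure_univ_eq_of_mem_stateBisim h ()

theorem exists_pos_mem_zhouOrdinals : ∃ z ∈ zhouOrdinals, 0 < z := by
  obtain ⟨T, mT, K, cK, N, p, hT, hp, hp', -⟩ := exists_separable_glued_process
    (fun _ => loopProcess) (fun _ => id)
    (fun _ => separableMeasurableSpace_iff.2 ⟨inferInstance, inferInstance⟩)
    fun _ => notMem_stateBisim_loopProcess
  exact exists_mem_zhouOrdinals_lt_iff.2
    ⟨T, mT, K, cK, N, hT, p.1, p.2, by rwa [LMP.Oiter_zero], hp'⟩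

theorem bddAbove_zhouOrdinals : BddAbove zhouOrdinals := by
  let X := ℕ → Bool
  refine ⟨(Order.succ (Cardinal.mk (Set (X × X)))).ord, ?_⟩
  rintro ζ ⟨P, hP, hζ⟩
  let _ := P.mS
  obtain ⟨φ, hφ, -⟩ := SeparableMeasurableSpace.exists_comap_eq hP
  refine (Cardinal.lt_ord.2 (Order.lt_succ_of_le ?_)).le
  exact (LMP.IsZhou.card_le hζ).trans
    (Cardinal.mk_le_of_injective (hφ.prodMap hφ).image_injective)

theorem aleph0_lt_cof_of_forall_iSup_add_one_lt {o : Ordinal.{u}} (h0 : 0 < o)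
    (h : ∀ f : ℕ → Ordinal.{u}, (∀ n, f n < o) → ⨆ n, (f n + 1) < o) :
    Cardinal.aleph0 < o.cof := by
  by_contra! hcof
  obtain ⟨s, hs, hcard⟩ := Order.exists_cof_eq (Set.Iio o)
  have hcount : s.Countable := by
    rw [← Cardinal.le_aleph0_iff_set_countable, hcard, Ordinal.cof_Iio, ← Ordinal.lift_cof]
    exact Cardinal.lift_le_aleph0.2 hcof
  obtain ⟨x, hx, -⟩ := hs ⟨0, h0⟩
  obtain ⟨f, rfl⟩ := hcount.exists_eq_range ⟨x, hx⟩
  obtain ⟨_, ⟨n, rfl⟩, hn⟩ := hs ⟨_, h (fun n => f n) fun n => (f n).2⟩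
  exact (Ordinal.lt_iSup_add_one (fun n => (f n : Ordinal)) n).not_ge hn

theorem aleph0_lt_cof_sSup_zhouOrdinals : Cardinal.aleph0 < (sSup zhouOrdinals).cof := by
  have lt_sSup_iff {α : Ordinal} : α < sSup zhouOrdinals ↔ ∃ z ∈ zhouOrdinals, α < z :=
    lt_csSup_iff bddAbove_zhouOrdinals (exists_pos_mem_zhouOrdinals.imp fun _ => And.left)
  refine aleph0_lt_cof_of_forall_iSup_add_one_lt (lt_sSup_iff.2 exists_pos_mem_zhouOrdinals) ?_
  exact fun f hf => lt_sSup_iff.2 (exists_mem_zhouOrdinals_iSup_lt fun n => lt_sSup_iff.1 (hf n))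

theorem exists_sepLMP_zhou_ge_sup_succ_general (ζ : ℕ → Ordinal.{0})
    (hζ : ∀ m, ∃ z ∈ zhouOrdinals, ζ m < z) :
    (∃ Q : PackedLMP, Q.Separable ∧
      ∃ z : Ordinal.{0}, Q.IsZhou z ∧ (⨆ m, ζ m) + 1 ≤ z) ∧
    Cardinal.aleph0 < (sSup zhouOrdinals).cof := by
  obtain ⟨z, ⟨Q, hQ, hz⟩, hlt⟩ := exists_mem_zhouOrdinals_iSup_lt hζ
  refine ⟨⟨Q, hQ, z, hz, Order.add_one_le_of_lt (lt_of_le_of_lt ?_ hlt)⟩,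
    aleph0_lt_cof_sSup_zhouOrdinals⟩
  exact Ordinal.iSup_le fun m => (Ordinal.lt_iSup_add_one ζ m).le

/-- Given a sequence of separable LMPs whose Zhou ordinals `ζ_m` are strictly increasing with
`ζ₀ > 0`, there is a separable LMP whose Zhou ordinal is at least `(sup_m ζ_m) + 1`.
Consequently, the supremum of the Zhou ordinals of separable LMPs has uncountable
cofinality. -/
theorem exists_sepLMP_zhou_ge_sup_succ
    (P : ℕ → PackedLMP) (ζ : ℕ → Ordinal.{0})
    (hsep : ∀ m, (P m).Separable) (hZ : ∀ m, (P m).IsZhou (ζ m))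
    (hmono : StrictMono ζ) (h0 : 0 < ζ 0) :
    (∃ Q : PackedLMP, Q.Separable ∧
      ∃ z : Ordinal.{0}, Q.IsZhou z ∧ (⨆ m, ζ m) + 1 ≤ z) ∧
    Cardinal.aleph0 < (sSup zhouOrdinals).cof :=
  exists_sepLMP_zhou_ge_sup_succ_general ζ fun m =>
    ⟨ζ (m + 1), ⟨P (m + 1), hsep _, hZ _⟩, hmono m.lt_succ_self⟩
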